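/- arXiv:2410.07452 — 2 statements merged into one kernel-verified Lean document; each statement's English description precedes it below -/
import Mathlib

section
/- Let X ⊂ ℝ^n be finite with conv(X) k-dimensional and x in the relative interior of conv(X). Let Z ⊆ X be such that conv(Z) is k'-dimensional and x is in the relative interior of conv(Z). Then there exists Y ⊆ X with Z ⊆ Y, |Y| ≤ 2(k−k') + |Z|, conv(Y) k-dimensional, and x in the relative interior of conv(Y). -/
/-!
After translating `x` to the origin, `x` lies in the relative interior of `conv S` exactly when
the vectors `a - x`, `a ∈ S`, satisfy a linear relation with all coefficients positive
(`mem_intrinsicInterior_convexHull_iff`), and then `dim conv S` is the dimension of their linear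
span (`finrank_vectorSpan_eq`). So the theorem is about positive relations.

Let `L` be the span of the vectors of `Z` and suppose `L` is not the span of those of `X`. Among
the nonempty sets of points of `X` outside `L` that have a positive combination in `L`, take one,
`T`, of minimal cardinality. By minimality (subtracting a multiple of any other relation until a
coefficient vanishes), removing one point from `T` leaves vectors linearly independent modulo `L`,
so adding `T` to `Z` raises the dimension by at least `|T| - 1`. Moreover `|T| ≥ 2`, because no
point of `T` is in `L`; hence `|T| ≤ 2 (|T| - 1)`. The set `Z ∪ T` has a positive relation again,
as every element of `L` is absorbed by a large multiple of the positive relation on `Z`. Iterating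
(`exists_balanced_extension`) gives the bound.
-/

open Finset Topology Filter

/-- The vectors `f a`, `a ∈ S`, satisfy a linear relation whose coefficients are all positive. -/
def HasPosRel {ι V : Type*} [AddCommGroup V] [Module ℝ V] (f : ι → V) (S : Finset ι) : Prop :=
  ∃ w : ι → ℝ, (∀ a ∈ S, 0 < w a) ∧ ∑ a ∈ S, w a • f a = 0

/-! ### Positive relations among vectors -/

section Linear

variable {ι V : Type*} [AddCommGroup V] [Module ℝ V] (f : ι → V)

lemma exists_coeffs_of_mem_span_image {S : Finset ι} {y : V}
    (hy : y ∈ Submodule.span ℝ (f '' (S : Set ι))) : ∃ c : ι → ℝ, ∑ a ∈ S, c a • f a = y := by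
  classical
  obtain ⟨c, hc⟩ := (Submodule.mem_span_image_finset_iff_exists_fun ℝ).1 hy
  refine ⟨fun a => if h : a ∈ S then c ⟨a, h⟩ else 0, ?_⟩
  rw [← Finset.sum_coe_sort, ← hc]
  exact Finset.sum_congr rfl fun a _ => by simp

/-- A positive combination of `T` with value in the span of `Z` can be completed to a positive
relation on `Z ∪ T`, if `Z` itself has one. -/
lemma HasPosRel.union [DecidableEq ι] {Z T : Finset ι} (hZ : HasPosRel f Z) (hd : Disjoint Z T) (w : ι → ℝ)
    (hw : ∀ a ∈ T, 0 < w a)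
    (hwL : ∑ a ∈ T, w a • f a ∈ Submodule.span ℝ (f '' (Z : Set ι))) :
    HasPosRel f (Z ∪ T) := by
  obtain ⟨v, hv, hv0⟩ := hZ
  obtain ⟨d, hd'⟩ := exists_coeffs_of_mem_span_image f hwL
  set M : ℝ := ∑ a ∈ Z, |d a| / v a + 1 with hM
  have hMd : ∀ a ∈ Z, d a < M * v a := by
    intro a ha
    have h1 : |d a| / v a ≤ ∑ a ∈ Z, |d a| / v a :=
      Finset.single_le_sum (f := fun a => |d a| / v a)
        (fun b hb => div_nonneg (abs_nonneg _) (hv b hb).le) ha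
    have h2 : |d a| / v a < M := by linarith
    rw [div_lt_iff₀ (hv a ha)] at h2
    exact (le_abs_self _).trans_lt h2
  refine ⟨fun a => if a ∈ Z then M * v a - d a else w a, ?_, ?_⟩
  · intro a ha
    by_cases haZ : a ∈ Z
    · simpa [haZ] using hMd a haZ
    · simpa [haZ] using hw a ((Finset.mem_union.1 ha).resolve_left haZ)
  · rw [Finset.sum_union hd]
    have e1 : ∑ a ∈ Z, (if a ∈ Z then M * v a - d a else w a) • f a
        = M • ∑ a ∈ Z, v a • f a - ∑ a ∈ Z, d a • f a := by
      rw [Finset.smul_sum, ← Finset.sum_sub_distrib]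
      refine Finset.sum_congr rfl fun a ha => ?_
      rw [if_pos ha, sub_smul, mul_smul]
    have e2 : ∑ a ∈ T, (if a ∈ Z then M * v a - d a else w a) • f a = ∑ a ∈ T, w a • f a := by
      refine Finset.sum_congr rfl fun a ha => ?_
      rw [if_neg (Finset.disjoint_right.1 hd ha)]
    rw [e1, e2, hv0, hd']
    simp

/-- Exchange step: if a positive combination and another combination of `T` both lie in `L`, the
latter with a positive coefficient somewhere and coefficient zero at `t₀`, then a proper nonempty
subset of `T` has a positive combination in `L`. -/
lemma exists_smaller_posComb {L : Submodule ℝ V} {T : Finset ι} {w c : ι → ℝ}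
    (hw : ∀ a ∈ T, 0 < w a) (hwL : ∑ a ∈ T, w a • f a ∈ L) (hcL : ∑ a ∈ T, c a • f a ∈ L)
    {t₀ : ι} (ht₀ : t₀ ∈ T) (hc₀ : c t₀ = 0) (hc : ∃ a ∈ T, 0 < c a) :
    ∃ T' ⊂ T, T'.Nonempty ∧
      ∃ w' : ι → ℝ, (∀ a ∈ T', 0 < w' a) ∧ ∑ a ∈ T', w' a • f a ∈ L := by
  -- `s` is where a coefficient of `w - r c` vanishes first as `r` grows from `0`.
  obtain ⟨s, hs, hmin⟩ := (T.filter fun a => 0 < c a).exists_min_image (fun a => w a / c a)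
    (by obtain ⟨a, ha, h⟩ := hc; exact ⟨a, by simp [ha, h]⟩)
  simp only [Finset.mem_filter] at hs hmin
  obtain ⟨hsT, hsc⟩ := hs
  set r := w s / c s with hr
  have hr0 : 0 < r := div_pos (hw s hsT) hsc
  have hnn : ∀ a ∈ T, 0 ≤ w a - r * c a := by
    intro a ha
    rcases lt_or_ge 0 (c a) with h | h
    · have := (le_div_iff₀ h).1 (hmin a ⟨ha, h⟩)
      linarith
    · have := mul_nonpos_of_nonneg_of_nonpos hr0.le h
      linarith [hw a ha]
  have hzero : w s - r * c s = 0 := by rw [hr]; field_simp; ring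
  refine ⟨T.filter fun a => w a - r * c a ≠ 0, ?_, ⟨t₀, ?_⟩, fun a => w a - r * c a, ?_, ?_⟩
  · refine Finset.filter_ssubset.2 ⟨s, hsT, by simpa using hzero⟩
  · simp [ht₀, hc₀, (hw t₀ ht₀).ne']
  · intro a ha
    rw [Finset.mem_filter] at ha
    exact lt_of_le_of_ne (hnn a ha.1) (Ne.symm ha.2)
  · have e : ∑ a ∈ T.filter (fun a => w a - r * c a ≠ 0), (w a - r * c a) • f a
        = ∑ a ∈ T, w a • f a - r • ∑ a ∈ T, c a • f a := by
      rw [Finset.smul_sum, ← Finset.sum_sub_distrib, Finset.sum_filter]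
      refine Finset.sum_congr rfl fun a _ => ?_
      split_ifs with h
      · rw [sub_smul, mul_smul]
      · rw [← mul_smul, ← sub_smul, not_not.1 h, zero_smul]
    rw [e]
    exact L.sub_mem hwL (L.smul_mem _ hcL)

/-- If the points of `T` outside `t₀` are linearly independent modulo the span of `Z`, adding `T`
to `Z` raises the dimension by at least `|T| - 1`. -/
lemma finrank_span_union_ge [DecidableEq ι] [FiniteDimensional ℝ V] {Z T : Finset ι} {t₀ : ι} (ht₀ : t₀ ∈ T)
    (hind : ∀ c : ι → ℝ, ∑ a ∈ T.erase t₀, c a • f a ∈ Submodule.span ℝ (f '' (Z : Set ι)) →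
      ∀ a ∈ T.erase t₀, c a = 0) :
    Module.finrank ℝ (Submodule.span ℝ (f '' (Z : Set ι))) + T.card ≤
      Module.finrank ℝ (Submodule.span ℝ (f '' ((Z ∪ T : Finset ι) : Set ι))) + 1 := by
  set L := Submodule.span ℝ (f '' (Z : Set ι)) with hL
  set U := Submodule.span ℝ (f '' ((T.erase t₀ : Finset ι) : Set ι)) with hU
  have hli : LinearIndepOn ℝ f ((T.erase t₀ : Finset ι) : Set ι) := by
    rw [linearIndepOn_finset_iff]
    intro c hc
    exact hind c (by rw [hc]; exact L.zero_mem)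
  have hUr : Module.finrank ℝ U = T.card - 1 := by
    rw [hU, Set.image_eq_range, finrank_span_eq_card hli]
    rw [← Nat.card_eq_fintype_card, Nat.card_coe_set_eq, Set.ncard_coe_finset,
      Finset.card_erase_of_mem ht₀]
  have hdisj : L ⊓ U = ⊥ := by
    rw [eq_bot_iff]
    rintro y ⟨hyL, hyU⟩
    obtain ⟨c, hc⟩ := exists_coeffs_of_mem_span_image f hyU
    have h0 := hind c (by rw [hc]; exact hyL)
    rw [Submodule.mem_bot, ← hc]
    exact Finset.sum_eq_zero fun a ha => by rw [h0 a ha, zero_smul]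
  have hsum := Submodule.finrank_sup_add_finrank_inf_eq L U
  rw [hdisj, finrank_bot, hUr] at hsum
  have hle : L ⊔ U ≤ Submodule.span ℝ (f '' ((Z ∪ T : Finset ι) : Set ι)) := by
    refine sup_le (Submodule.span_mono (Set.image_mono ?_))
      (Submodule.span_mono (Set.image_mono ?_))
    · exact_mod_cast Finset.subset_union_left
    · exact_mod_cast (Finset.erase_subset _ _).trans Finset.subset_union_right
  have := Submodule.finrank_mono hle
  have hpos : 0 < T.card := Finset.card_pos.2 ⟨t₀, ht₀⟩
  omega

/-- One enlargement: if `Z` does not span, some `T` of at least two points outside `Z` can be added,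
keeping a positive relation and raising the dimension by at least `|T| - 1`. -/
lemma exists_enlargement [DecidableEq ι] [FiniteDimensional ℝ V] {X Z : Finset ι} (hZX : Z ⊆ X)
    (hX : HasPosRel f X) (hZ : HasPosRel f Z)
    (hne : Submodule.span ℝ (f '' (Z : Set ι)) ≠ Submodule.span ℝ (f '' (X : Set ι))) :
    ∃ T ⊆ X, Disjoint Z T ∧ 2 ≤ T.card ∧ HasPosRel f (Z ∪ T) ∧
      Module.finrank ℝ (Submodule.span ℝ (f '' (Z : Set ι))) + T.card ≤
        Module.finrank ℝ (Submodule.span ℝ (f '' ((Z ∪ T : Finset ι) : Set ι))) + 1 := by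
  classical
  set L := Submodule.span ℝ (f '' (Z : Set ι)) with hL
  let P : Finset ι → Prop := fun T => T.Nonempty ∧
    ∃ w : ι → ℝ, (∀ a ∈ T, 0 < w a) ∧ ∑ a ∈ T, w a • f a ∈ L
  have hP : P (X.filter fun a => f a ∉ L) := by
    constructor
    · by_contra hemp
      rw [Finset.not_nonempty_iff_eq_empty, Finset.filter_eq_empty_iff] at hemp
      refine hne (le_antisymm (Submodule.span_mono (Set.image_mono (by exact_mod_cast hZX))) ?_)
      rw [Submodule.span_le]
      rintro _ ⟨a, ha, rfl⟩
      exact not_not.1 (hemp ha)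
    · obtain ⟨u, hu, hu0⟩ := hX
      refine ⟨u, fun a ha => hu a (Finset.filter_subset _ _ ha), ?_⟩
      have hsplit := Finset.sum_filter_add_sum_filter_not X (fun a => f a ∉ L)
        (fun a => u a • f a)
      rw [hu0] at hsplit
      rw [eq_neg_of_add_eq_zero_left hsplit]
      refine L.neg_mem (L.sum_mem fun a ha => L.smul_mem _ ?_)
      exact not_not.1 (Finset.mem_filter.1 ha).2
  obtain ⟨T, hT, hmin⟩ := (((X.filter fun a => f a ∉ L).powerset).filter P).exists_min_image
    Finset.card ⟨_, Finset.mem_filter.2 ⟨Finset.mem_powerset_self _, hP⟩⟩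
  rw [Finset.mem_filter, Finset.mem_powerset] at hT
  obtain ⟨hTX, ⟨t₀, ht₀⟩, w, hw, hwL⟩ := hT
  have hTL : ∀ a ∈ T, f a ∉ L := fun a ha => (Finset.mem_filter.1 (hTX ha)).2
  have hd : Disjoint Z T := Finset.disjoint_right.2 fun a ha haZ =>
    hTL a ha (Submodule.subset_span ⟨a, haZ, rfl⟩)
  have hno : ∀ c : ι → ℝ, c t₀ = 0 → ∑ a ∈ T, c a • f a ∈ L → ∀ a ∈ T, c a ≤ 0 := by
    intro c hc₀ hcL a ha
    by_contra! hpos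
    obtain ⟨T', hT', hne', hw'⟩ := exists_smaller_posComb f hw hwL hcL ht₀ hc₀ ⟨a, ha, hpos⟩
    have := hmin T' (Finset.mem_filter.2
      ⟨Finset.mem_powerset.2 (hT'.subset.trans hTX), hne', hw'⟩)
    exact absurd (Finset.card_lt_card hT') (not_lt.2 this)
  refine ⟨T, hTX.trans (Finset.filter_subset _ _), hd, ?_, hZ.union f hd w hw hwL,
    finrank_span_union_ge f ht₀ ?_⟩
  · by_contra! hcard
    have h1 : T.card = 1 := by
      have : 0 < T.card := Finset.card_pos.2 ⟨t₀, ht₀⟩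
      omega
    obtain ⟨b, rfl⟩ := Finset.card_eq_one.1 h1
    rw [Finset.sum_singleton] at hwL
    exact hTL b (by simp) ((L.smul_mem_iff (hw b (by simp)).ne').1 hwL)
  · intro c hc a ha
    obtain ⟨hat, haT⟩ := Finset.mem_erase.1 ha
    -- The combination on `T \ {t₀}`, extended by the coefficient `0` at `t₀`.
    have hext : ∑ b ∈ T, (if b = t₀ then 0 else c b) • f b = ∑ b ∈ T.erase t₀, c b • f b := by
      rw [← Finset.add_sum_erase T _ ht₀, if_pos rfl, zero_smul, zero_add]
      refine Finset.sum_congr rfl fun b hb => ?_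
      rw [if_neg (Finset.ne_of_mem_erase hb)]
    have h1 := hno (fun b => if b = t₀ then 0 else c b) (by simp)
      (by rw [hext]; exact hc) a haT
    have h2 := hno (fun b => -(if b = t₀ then 0 else c b)) (by simp)
      (by simp only [neg_smul, Finset.sum_neg_distrib]; rw [hext]; exact L.neg_mem hc) a haT
    simp only [if_neg hat] at h1 h2
    linarith

/-- The linear form of the theorem: a set with a positive relation can be enlarged within `X` to one
that still has a positive relation and spans as much as `X`, at the cost of at most two points per
missing dimension. The induction is on a bound `m` for the number of points outside `Z`. -/
lemma exists_balanced_extension [DecidableEq ι] [FiniteDimensional ℝ V] (X : Finset ι) (hX : HasPosRel f X)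
    (m : ℕ) : ∀ Z : Finset ι, (X \ Z).card ≤ m → Z ⊆ X → HasPosRel f Z →
    ∃ Y, Z ⊆ Y ∧ Y ⊆ X ∧ HasPosRel f Y ∧
      Submodule.span ℝ (f '' (Y : Set ι)) = Submodule.span ℝ (f '' (X : Set ι)) ∧
      Y.card + 2 * Module.finrank ℝ (Submodule.span ℝ (f '' (Z : Set ι))) ≤
        2 * Module.finrank ℝ (Submodule.span ℝ (f '' (X : Set ι))) + Z.card := by
  induction m with
  | zero =>
    intro Z hm hZX hZ
    have hXZ : X = Z := by
      refine Finset.Subset.antisymm (Finset.sdiff_eq_empty_iff_subset.1 ?_) hZX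
      exact Finset.card_eq_zero.1 (Nat.le_zero.1 hm)
    subst hXZ
    exact ⟨X, subset_rfl, subset_rfl, hX, rfl, by omega⟩
  | succ m ih =>
    intro Z hm hZX hZ
    by_cases hne : Submodule.span ℝ (f '' (Z : Set ι)) = Submodule.span ℝ (f '' (X : Set ι))
    · exact ⟨Z, subset_rfl, hZX, hZ, hne, by rw [hne]; omega⟩
    · obtain ⟨T, hTX, hd, hT2, hpos, hrank⟩ := exists_enlargement f hZX hX hZ hne
      have hUX : Z ∪ T ⊆ X := Finset.union_subset hZX hTX
      have hcard := Finset.card_union_of_disjoint hd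
      have h1 := Finset.card_sdiff_add_card_eq_card hUX
      have h2 := Finset.card_sdiff_add_card_eq_card hZX
      obtain ⟨Y, hY, hYX, hYpos, hYspan, hYcard⟩ := ih (Z ∪ T) (by omega) hUX hpos
      exact ⟨Y, Finset.subset_union_left.trans hY, hYX, hYpos, hYspan, by omega⟩

end Linear

/-! ### Relative interior of the convex hull of a finite set -/

section Convex

variable {E : Type*} [NormedAddCommGroup E] [NormedSpace ℝ E]

lemma mem_intrinsicInterior_iff_nhdsWithin {s : Set E} {x : E} :
    x ∈ intrinsicInterior ℝ s ↔
      x ∈ affineSpan ℝ s ∧ s ∈ 𝓝[(affineSpan ℝ s : Set E)] x := by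
  rw [mem_intrinsicInterior]
  constructor
  · rintro ⟨y, hy, rfl⟩
    refine ⟨y.2, ?_⟩
    rw [mem_interior_iff_mem_nhds] at hy
    exact preimage_coe_mem_nhds_subtype.1 hy
  · rintro ⟨hx, h⟩
    exact ⟨⟨x, hx⟩, mem_interior_iff_mem_nhds.2 (preimage_coe_mem_nhds_subtype.2 h), rfl⟩

lemma exists_weights_of_mem_convexHull {S : Finset E} {y : E}
    (hy : y ∈ convexHull ℝ (S : Set E)) :
    ∃ v : E → ℝ, (∀ a ∈ S, 0 ≤ v a) ∧ ∑ a ∈ S, v a = 1 ∧ ∑ a ∈ S, v a • a = y := by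
  obtain ⟨v, h0, h1, h2⟩ := Finset.mem_convexHull.1 hy
  exact ⟨v, h0, h1, by rw [← h2, Finset.centerMass_eq_of_sum_1 _ _ h1]; rfl⟩

lemma mem_convexHull_of_weights {S : Finset E} {y : E} (v : E → ℝ) (h0 : ∀ a ∈ S, 0 ≤ v a)
    (h1 : ∑ a ∈ S, v a = 1) (h2 : ∑ a ∈ S, v a • a = y) : y ∈ convexHull ℝ (S : Set E) := by
  refine Finset.mem_convexHull.2 ⟨v, h0, h1, ?_⟩
  rw [Finset.centerMass_eq_of_sum_1 _ _ h1, ← h2]; rfl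

/-- A positive relation among the `a - x` can be normalised to a convex combination. -/
lemma HasPosRel.exists_weights {S : Finset E} {x : E} (hS : S.Nonempty)
    (h : HasPosRel (fun a => a - x) S) :
    ∃ w : E → ℝ, (∀ a ∈ S, 0 < w a) ∧ ∑ a ∈ S, w a = 1 ∧ ∑ a ∈ S, w a • a = x := by
  obtain ⟨u, hu, hu0⟩ := h
  have hs : 0 < ∑ a ∈ S, u a := Finset.sum_pos hu hS
  refine ⟨fun a => (∑ b ∈ S, u b)⁻¹ * u a, fun a ha => mul_pos (inv_pos.2 hs) (hu a ha), ?_, ?_⟩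
  · rw [← Finset.mul_sum, inv_mul_cancel₀ hs.ne']
  · simp only [smul_sub, Finset.sum_sub_distrib, ← Finset.sum_smul] at hu0
    simp only [mul_smul, ← Finset.smul_sum]
    rw [sub_eq_zero.1 hu0, smul_smul, inv_mul_cancel₀ hs.ne', one_smul]

/-- The segment from `c` to a relative interior point `x` of `conv S` extends beyond `x`; with `c`
the centroid of `S` this yields positive weights. -/
lemma hasPosRel_of_mem_intrinsicInterior {S : Finset E} {x : E} (hS : S.Nonempty)
    (hx : x ∈ intrinsicInterior ℝ (convexHull ℝ (S : Set E))) :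
    HasPosRel (fun a => a - x) S := by
  obtain ⟨hxA, hnhds⟩ := mem_intrinsicInterior_iff_nhdsWithin.1 hx
  have hN : (0 : ℝ) < S.card := by exact_mod_cast hS.card_pos
  set c : E := ∑ a ∈ S, (S.card : ℝ)⁻¹ • a with hc
  have hcS : c ∈ convexHull ℝ (S : Set E) :=
    mem_convexHull_of_weights (fun _ => (S.card : ℝ)⁻¹) (fun _ _ => (inv_pos.2 hN).le)
      (by simp [hN.ne']) rfl
  have hcA := subset_affineSpan ℝ _ hcS
  have htend : Tendsto (fun t : ℝ => AffineMap.lineMap x c (-t)) (𝓝[>] 0)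
      (𝓝[(affineSpan ℝ (convexHull ℝ (S : Set E)) : Set E)] x) := by
    refine tendsto_nhdsWithin_iff.2 ⟨?_, Eventually.of_forall fun t =>
      AffineMap.lineMap_mem _ hxA hcA⟩
    have hcont : Continuous fun t : ℝ => (AffineMap.lineMap x c (-t) : E) := by
      simp only [AffineMap.lineMap_apply_module]
      fun_prop
    have := hcont.tendsto 0
    simp only [neg_zero, AffineMap.lineMap_apply_zero] at this
    exact this.mono_left nhdsWithin_le_nhds
  obtain ⟨t, ht, ht0⟩ := ((htend.eventually hnhds).and self_mem_nhdsWithin).exists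
  replace ht0 : 0 < t := ht0
  obtain ⟨v, hv0, hv1, hv⟩ := exists_weights_of_mem_convexHull ht
  refine ⟨fun a => v a + t * (S.card : ℝ)⁻¹, fun a ha => ?_, ?_⟩
  · have := hv0 a ha
    positivity
  · rw [AffineMap.lineMap_apply_module] at hv
    have hx1 : ∑ a ∈ S, (S.card : ℝ)⁻¹ • x = x := by
      rw [← Finset.sum_smul]; simp [hN.ne']
    have key : ∑ a ∈ S, (v a + t * (S.card : ℝ)⁻¹) • (a - x) =
        ∑ a ∈ S, v a • a + t • c - ((∑ a ∈ S, v a) • x + t • ∑ a ∈ S, (S.card : ℝ)⁻¹ • x) := by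
      rw [hc, Finset.sum_smul, Finset.smul_sum, Finset.smul_sum, ← Finset.sum_add_distrib,
        ← Finset.sum_add_distrib, ← Finset.sum_sub_distrib]
      exact Finset.sum_congr rfl fun a _ => by module
    rw [key, hv, hv1, hx1]
    module

/-- With `y` any relative interior point of `conv S`, positive weights for `x` allow the segment
from `y` to `x` to be extended beyond `x` to some `z ∈ conv S`; a homothety centred at `z` carries
a relative neighbourhood of `y` onto one of `x`. -/
lemma mem_intrinsicInterior_of_hasPosRel [FiniteDimensional ℝ E] {S : Finset E} {x : E}
    (hS : S.Nonempty) (h : HasPosRel (fun a => a - x) S) :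
    x ∈ intrinsicInterior ℝ (convexHull ℝ (S : Set E)) := by
  obtain ⟨w, hw0, hw1, hw⟩ := h.exists_weights hS
  have hconv := convex_convexHull ℝ (S : Set E)
  obtain ⟨y, hy⟩ := Set.Nonempty.intrinsicInterior hconv
    (convexHull_nonempty_iff.2 (by exact_mod_cast hS : (S : Set E).Nonempty))
  obtain ⟨v, hv0, hv1, hv⟩ := exists_weights_of_mem_convexHull (intrinsicInterior_subset hy)
  obtain ⟨hyA, hyn⟩ := mem_intrinsicInterior_iff_nhdsWithin.1 hy
  obtain ⟨b, hb, hbmin⟩ := S.exists_min_image w hS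
  -- Each `v a` is at most `1`, so the smallest weight of `x` is an admissible step.
  set e := w b with he
  have he0 : 0 < e := hw0 b hb
  have hzS : x + e • (x - y) ∈ convexHull ℝ (S : Set E) := by
    refine mem_convexHull_of_weights (fun a => w a + e * (w a - v a)) (fun a ha => ?_) ?_ ?_
    · have h1 : v a ≤ 1 := hv1 ▸ Finset.single_le_sum hv0 ha
      have h2 := hbmin a ha
      have h3 := hw0 a ha
      nlinarith [mul_pos he0 h3]
    · rw [Finset.sum_add_distrib, ← Finset.mul_sum, Finset.sum_sub_distrib, hw1, hv1]; ring
    · simp only [add_smul, mul_smul, sub_smul, Finset.sum_add_distrib, ← Finset.smul_sum,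
        Finset.sum_sub_distrib, hw, hv]
  set z := x + e • (x - y) with hz
  have hxS : x ∈ convexHull ℝ (S : Set E) :=
    mem_convexHull_of_weights w (fun a ha => (hw0 a ha).le) hw1 hw
  refine mem_intrinsicInterior_iff_nhdsWithin.2 ⟨subset_affineSpan ℝ _ hxS, ?_⟩
  have hzA := subset_affineSpan ℝ _ hzS
  have htend : Tendsto (fun p : E => AffineMap.lineMap z p (1 + e⁻¹))
      (𝓝[(affineSpan ℝ (convexHull ℝ (S : Set E)) : Set E)] x)
      (𝓝[(affineSpan ℝ (convexHull ℝ (S : Set E)) : Set E)] y) := by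
    refine tendsto_nhdsWithin_iff.2 ⟨?_, ?_⟩
    · have hcont : Continuous fun p : E => (AffineMap.lineMap z p (1 + e⁻¹) : E) := by
        simp only [AffineMap.lineMap_apply_module]
        fun_prop
      have := hcont.tendsto x
      have hxy : (AffineMap.lineMap z x (1 + e⁻¹) : E) = y := by
        rw [AffineMap.lineMap_apply_module, hz]
        match_scalars <;> field_simp <;> ring
      rw [hxy] at this
      exact this.mono_left nhdsWithin_le_nhds
    · filter_upwards [self_mem_nhdsWithin] with p hp
      exact AffineMap.lineMap_mem _ hzA hp
  filter_upwards [htend.eventually hyn] with p hp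
  have hpe : p = (1 / (1 + e)) • z + (e / (1 + e)) • (AffineMap.lineMap z p (1 + e⁻¹) : E) := by
    have h1e : (1 + e) ≠ 0 := by positivity
    rw [AffineMap.lineMap_apply_module]
    match_scalars <;> field_simp <;> ring
  rw [hpe]
  exact hconv hzS hp (by positivity) (by positivity) (by field_simp)

lemma mem_intrinsicInterior_convexHull_iff [FiniteDimensional ℝ E] {S : Finset E} {x : E}
    (hS : S.Nonempty) :
    x ∈ intrinsicInterior ℝ (convexHull ℝ (S : Set E)) ↔ HasPosRel (fun a => a - x) S :=
  ⟨hasPosRel_of_mem_intrinsicInterior hS, mem_intrinsicInterior_of_hasPosRel hS⟩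

lemma finrank_vectorSpan_eq {S : Finset E} {x : E} (hS : S.Nonempty)
    (h : HasPosRel (fun a => a - x) S) :
    Module.finrank ℝ (vectorSpan ℝ (S : Set E)) =
      Module.finrank ℝ (Submodule.span ℝ ((fun a => a - x) '' (S : Set E))) := by
  obtain ⟨w, hw0, hw1, hw⟩ := h.exists_weights hS
  have hxS : x ∈ affineSpan ℝ (S : Set E) := convexHull_subset_affineSpan _
    (mem_convexHull_of_weights w (fun a ha => (hw0 a ha).le) hw1 hw)
  have e : vectorSpan ℝ (S : Set E) = Submodule.span ℝ ((fun a => a - x) '' (S : Set E)) := by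
    rw [← direction_affineSpan, ← affineSpan_insert_eq_affineSpan ℝ hxS, direction_affineSpan,
      vectorSpan_eq_span_vsub_set_right ℝ (Set.mem_insert x _), Set.image_insert_eq, vsub_self,
      Submodule.span_insert_zero]
    rfl
  rw [e]

end Convex

theorem steinitz_with_prescribed_subset (n k k' : ℕ) (X Z : Finset (Fin n → ℝ))
    (x : Fin n → ℝ)
    (hdim : Module.finrank ℝ (vectorSpan ℝ (X : Set (Fin n → ℝ))) = k)
    (hx : x ∈ intrinsicInterior ℝ (convexHull ℝ (X : Set (Fin n → ℝ))))
    (hZX : Z ⊆ X)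
    (hZdim : Module.finrank ℝ (vectorSpan ℝ (Z : Set (Fin n → ℝ))) = k')
    (hxZ : x ∈ intrinsicInterior ℝ (convexHull ℝ (Z : Set (Fin n → ℝ)))) :
    ∃ Y : Finset (Fin n → ℝ), Z ⊆ Y ∧ Y ⊆ X ∧ Y.card ≤ 2 * (k - k') + Z.card ∧
      Module.finrank ℝ (vectorSpan ℝ (Y : Set (Fin n → ℝ))) = k ∧
      x ∈ intrinsicInterior ℝ (convexHull ℝ (Y : Set (Fin n → ℝ))) := by
  classical
  have hZne : Z.Nonempty := by
    have : (convexHull ℝ (Z : Set (Fin n → ℝ))).Nonempty := ⟨x, intrinsicInterior_subset hxZ⟩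
    exact_mod_cast convexHull_nonempty_iff.1 this
  have hXne := hZne.mono hZX
  rw [mem_intrinsicInterior_convexHull_iff hXne] at hx
  rw [mem_intrinsicInterior_convexHull_iff hZne] at hxZ
  obtain ⟨Y, hZY, hYX, hY, hspan, hcard⟩ :=
    exists_balanced_extension (fun a => a - x) X hx _ Z le_rfl hZX hxZ
  have hYne := hZne.mono hZY
  rw [finrank_vectorSpan_eq hXne hx] at hdim
  rw [finrank_vectorSpan_eq hZne hxZ] at hZdim
  refine ⟨Y, hZY, hYX, ?_, ?_, (mem_intrinsicInterior_convexHull_iff hYne).2 hY⟩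
  · rw [hdim, hZdim] at hcard
    omega
  · rw [finrank_vectorSpan_eq hYne hY, hspan, hdim]
end

section
/- If (C_1,...,C_t) is a circuit decomposition of a matroid M on ground set E, then t = r*(M), the rank of the dual matroid, i.e., t = |E| − r(E). -/
/-!
Write `D j` for the union of the first `j` circuits. The theorem holds because adjoining one
circuit with a minimal lobe `L = C j \ D j` raises the rank by exactly `|L| - 1`: if `I` is a basis
of `D j` and `e ∈ L`, then `I ∪ (L \ {e})` is a basis of `D j ∪ C j`
(`Matroid.IsBasis.union_lobe_sdiff_singleton`). Each circuit therefore raises the nullity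
`|D j| - r (D j)` by exactly one, so the nullity of `D t = E` is `t`
(`Matroid.IsPartialCircDecomp.exists_isBasis`).
-/

/-- The rank of a set in a matroid: the size of a largest independent subset. -/
noncomputable def Matroid.rankOf {α : Type*} (M : Matroid α) (X : Set α) : ℕ :=
  sSup {n | ∃ I, I ⊆ X ∧ M.Indep I ∧ I.ncard = n}

/-- A circuit of a matroid is a minimal dependent set. -/
def Matroid.IsCircuitSet {α : Type*} (M : Matroid α) (C : Set α) : Prop :=
  M.Dep C ∧ ∀ D ⊂ C, M.Indep D

/-- `D j = C 0 ∪ ⋯ ∪ C (j-1)`, the union of the first `j` circuits of a sequence. -/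
def circUnion {α : Type*} (C : ℕ → Set α) (j : ℕ) : Set α := ⋃ i < j, C i

/-- `(C 0, …, C (t-1))` is a partial circuit decomposition of `M`: every `C i` is a
circuit, and for `i ≥ 1` the lobe `C i \ D i` is nonempty (E1) and inclusionwise minimal
among the lobes of circuits having a nonempty lobe (E2). -/
def Matroid.IsPartialCircDecomp {α : Type*} (M : Matroid α) (C : ℕ → Set α) (t : ℕ) : Prop :=
  (∀ i < t, M.IsCircuitSet (C i)) ∧
  ∀ i, 1 ≤ i → i < t →
    C i \ circUnion C i ≠ ∅ ∧
    ∀ C', M.IsCircuitSet C' → C' \ circUnion C i ≠ ∅ →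
      ¬ (C' \ circUnion C i ⊂ C i \ circUnion C i)

/-- A circuit decomposition is a partial circuit decomposition covering the ground set. -/
def Matroid.IsCircDecomp {α : Type*} (M : Matroid α) (C : ℕ → Set α) (t : ℕ) : Prop :=
  M.IsPartialCircDecomp C t ∧ circUnion C t = M.E

/-- A matroid is bridgeless if every element of the ground set lies in a circuit. -/
def Matroid.Bridgeless {α : Type*} (M : Matroid α) : Prop :=
  ∀ e ∈ M.E, ∃ C, M.IsCircuitSet C ∧ e ∈ C

theorem Matroid.isCircuitSet_iff_isCircuit {α : Type*} {M : Matroid α} {C : Set α} :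
    M.IsCircuitSet C ↔ M.IsCircuit C :=
  Matroid.isCircuit_iff_forall_ssubset.symm

/-- Independence holds because a circuit inside `I ∪ (L \ {e})` would have a lobe properly
contained in `L`; by minimality that lobe is empty, which puts the circuit inside `I`. The set
spans because the missing element `e` lies in the closure of `C \ {e}`. -/
theorem Matroid.IsBasis.union_lobe_sdiff_singleton {α : Type*} {M : Matroid α} {I D C : Set α}
    {e : α} (hI : M.IsBasis I D) (hC : M.IsCircuit C) (he : e ∈ C \ D)
    (hmin : ∀ C', M.IsCircuit C' → C' \ D ≠ ∅ → ¬ (C' \ D ⊂ C \ D)) :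
    M.IsBasis (I ∪ ((C \ D) \ {e})) (D ∪ C) := by
  have hDE : D ⊆ M.E := hI.subset_ground
  have hCE : C ⊆ M.E := hC.subset_ground
  have hID : I ⊆ D := hI.subset
  have hJE : I ∪ ((C \ D) \ {e}) ⊆ M.E :=
    Set.union_subset (hID.trans hDE) (Set.sdiff_subset.trans (Set.sdiff_subset.trans hCE))
  have hind : M.Indep (I ∪ ((C \ D) \ {e})) := by
    by_contra hdep
    obtain ⟨C', hC'J, hC'⟩ := ((M.not_indep_iff hJE).1 hdep).exists_isCircuit_subset
    have hsub : C' \ D ⊆ (C \ D) \ {e} := by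
      rintro x ⟨hx, hxD⟩
      exact (hC'J hx).resolve_left fun h => hxD (hID h)
    by_cases h0 : C' \ D = ∅
    · refine hC'.not_indep (hI.indep.subset fun x hx => ?_)
      exact (hC'J hx).resolve_right fun h => h.1.2 (Set.sdiff_eq_empty.1 h0 hx)
    · refine hmin C' hC' h0 ⟨hsub.trans Set.sdiff_subset, fun h => ?_⟩
      exact (hsub (h he)).2 rfl
  have hDcl : D ⊆ M.closure (I ∪ ((C \ D) \ {e})) :=
    hI.subset_closure.trans (M.closure_subset_closure Set.subset_union_left)
  have hCe : C \ {e} ⊆ M.closure (I ∪ ((C \ D) \ {e})) := by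
    rintro x ⟨hxC, hxe⟩
    by_cases hxD : x ∈ D
    · exact hDcl hxD
    · exact M.subset_closure _ hJE (Or.inr ⟨⟨hxC, hxD⟩, hxe⟩)
  refine hind.isBasis_of_subset_of_subset_closure ?_ (Set.union_subset hDcl fun x hx => ?_)
  · exact Set.union_subset_union hID (Set.sdiff_subset.trans Set.sdiff_subset)
  · by_cases hxe : x = e
    · subst hxe
      exact M.closure_subset_closure_of_subset_closure hCe
        (hC.mem_closure_sdiff_singleton_of_mem hx)
    · exact hCe ⟨hx, hxe⟩

/-- The union of the first `j` circuits has nullity `j`, the nullity being read off a basis. -/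
theorem Matroid.IsPartialCircDecomp.exists_isBasis {α : Type*} {M : Matroid α} [M.Finite]
    {C : ℕ → Set α} {t : ℕ} (h : M.IsPartialCircDecomp C t) (j : ℕ) (hj : j ≤ t) :
    ∃ I, M.IsBasis I (circUnion C j) ∧ j + I.ncard = (circUnion C j).ncard := by
  induction j with
  | zero => exact ⟨∅, by simp [circUnion], by simp [circUnion]⟩
  | succ j ih =>
    obtain ⟨I, hI, hcard⟩ := ih (by omega)
    have hC : M.IsCircuit (C j) := isCircuitSet_iff_isCircuit.1 (h.1 j (by omega))
    -- Conditions (E1) and (E2) start at the second circuit; for the first one they hold because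
    -- circuits are nonempty and pairwise incomparable.
    have hlobe : (C j \ circUnion C j).Nonempty ∧ ∀ C', M.IsCircuit C' →
        C' \ circUnion C j ≠ ∅ → ¬ (C' \ circUnion C j ⊂ C j \ circUnion C j) := by
      rcases Nat.eq_zero_or_pos j with rfl | hpos
      · have h0 : circUnion C 0 = ∅ := by simp [circUnion]
        simp only [h0, Set.sdiff_empty]
        exact ⟨hC.nonempty, fun C' hC' _ hss => hC'.not_indep (hC.ssubset_indep hss)⟩
      · obtain ⟨h1, h2⟩ := h.2 j hpos (by omega)
        exact ⟨Set.nonempty_iff_ne_empty.2 h1,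
          fun C' hC' => h2 C' (isCircuitSet_iff_isCircuit.2 hC')⟩
    obtain ⟨⟨e, he⟩, hmin⟩ := hlobe
    have hU : circUnion C (j + 1) = circUnion C j ∪ C j := Set.biUnion_lt_succ C j
    have hDfin : (circUnion C j).Finite := M.set_finite _ hI.subset_ground
    have hLfin : (C j \ circUnion C j).Finite := (M.set_finite _ hC.subset_ground).sdiff
    refine ⟨_, hU ▸ hI.union_lobe_sdiff_singleton hC he hmin, ?_⟩
    rw [hU, ← Set.union_sdiff_self (s := circUnion C j),
      Set.ncard_union_eq Set.disjoint_sdiff_right hDfin hLfin,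
      Set.ncard_union_eq
        (Set.disjoint_sdiff_right.mono hI.subset Set.sdiff_subset)
        (hDfin.subset hI.subset) hLfin.sdiff]
    have := Set.ncard_sdiff_singleton_add_one he hLfin
    omega

theorem Matroid.IsBase.rankOf_ground {α : Type*} {M : Matroid α} [M.Finite] {B : Set α}
    (hB : M.IsBase B) : M.rankOf M.E = B.ncard := by
  refine IsGreatest.csSup_eq ⟨⟨B, hB.subset_ground, hB.indep, rfl⟩, ?_⟩
  rintro n ⟨I, -, hI, rfl⟩
  obtain ⟨B', hB', hIB'⟩ := hI.exists_isBase_superset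
  rw [hB.ncard_eq_ncard_of_isBase hB']
  exact Set.ncard_le_ncard hIB' (M.set_finite _ hB'.subset_ground)

/-- The number of circuits in any circuit decomposition of a finite matroid equals the
rank of the dual matroid, `|E| - r(E)`. -/
theorem circDecomp_length_eq_dual_rank {α : Type*} (M : Matroid α) [M.Finite]
    (C : ℕ → Set α) (t : ℕ) (hC : M.IsCircDecomp C t) :
    t + M.rankOf M.E = M.E.ncard := by
  obtain ⟨I, hI, hcard⟩ := hC.1.exists_isBasis t le_rfl
  rw [hC.2] at hI hcard
  rwa [(Matroid.isBasis_ground_iff.1 hI).rankOf_ground]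
end
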